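/- A finite simple graph G contains no cycle of even length if and only if G is a cactus graph (any two distinct cycles of G intersect in at most one vertex) all of whose cycles have odd length. In particular, if a finite simple graph contains two distinct cycles sharing at least two vertices, then it contains a cycle of even length. -/

import Mathlib

open SimpleGraph

namespace OddCyc
open SimpleGraph.Walk

variable {V : Type*} [DecidableEq V] {G : SimpleGraph V}

lemma glue {u v : V} {p q : G.Walk u v} (hp : p.IsPath) (hq : q.IsPath) (h : p ≠ q)
    (hw : ∀ w, w ∈ p.support → w ∈ q.support → w ≠ u → w = v) :
    (p.append q.reverse).IsCycle := by
  refine hp.isCycle_append (isPath_reverse_iff q |>.mpr hq) (fun _ ↦ ?_) ?_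
  · grind [dropLast_support_concat, IsPath.support_nodup, support_reverse, cons_tail_support]
  · grind [length_reverse, eq_of_length_le_one]

lemma split_edges {u v w : V} (p : G.Walk u v) (h : w ∈ p.support) {e : Sym2 V}
    (he : e ∈ p.edges) : e ∈ (p.takeUntil w h).edges ∨ e ∈ (p.dropUntil w h).edges := by
  rw [← List.mem_append, ← edges_append, take_spec]
  exact he

lemma ear (S : Set V) (E : Set (Sym2 V)) : ∀ (n : ℕ) {u v : V} (p : G.Walk u v), p.length = n →
    p.IsPath → u ≠ v → u ∈ S → v ∈ S → (∃ e ∈ p.edges, e ∉ E) →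
    ∃ (a b : V) (q : G.Walk a b), q.IsPath ∧ a ≠ b ∧ a ∈ S ∧ b ∈ S ∧ (∃ e ∈ q.edges, e ∉ E) ∧
      ∀ w ∈ q.support, w ∈ S → w ≠ a → w = b := by
  intro n
  induction n using Nat.strongRec with | ind n ih =>
  intro u v p hn hp huv hu hv he
  by_cases! hw : ∃ w ∈ p.support, w ∈ S ∧ w ≠ u ∧ w ≠ v
  · obtain ⟨w, hwp, hwS, hwu, hwv⟩ := hw
    obtain ⟨e, he, heE⟩ := he
    rcases split_edges p hwp he with h | h
    · exact ih _ (hn ▸ length_takeUntil_lt_length hwp hwv) _ rfl (hp.takeUntil hwp) hwu.symm hu hwS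
        ⟨e, h, heE⟩
    · exact ih _ (hn ▸ length_dropUntil_lt_length hwp hwu) _ rfl (hp.dropUntil hwp) hwv hwS hv
        ⟨e, h, heE⟩
  · exact ⟨u, v, p, hp, huv, hu, hv, he, hw⟩

lemma cyc_drop {u w : V} {c : G.Walk u u} (hc : c.IsCycle) (h : w ∈ c.support) (hne : u ≠ w) :
    (c.dropUntil w h).IsPath := by
  rw [← take_spec c h] at hc
  exact hc.isPath_of_append_right (not_nil_of_ne hne)

lemma main_aux {u v : V} (w₁ : G.Walk u u) (w₂ : G.Walk v v) (h₁ : w₁.IsCycle) (h₂ : w₂.IsCycle)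
    (he : ∃ e ∈ w₂.edges, e ∉ w₁.edges)
    (h : 2 ≤ (w₁.support.toFinset ∩ w₂.support.toFinset).card) :
    ∃ (x : V) (w : G.Walk x x), w.IsCycle ∧ Even w.length := by
  obtain ⟨x, hx, y, hy, hxy⟩ := Finset.one_lt_card.mp h
  simp only [Finset.mem_inter, List.mem_toFinset] at hx hy
  obtain ⟨e, he, he1⟩ := he
  have key : ∃ (a b : V) (q : G.Walk a b), q.IsPath ∧ a ≠ b ∧ a ∈ {z | z ∈ w₁.support} ∧
      b ∈ {z | z ∈ w₁.support} ∧ (∃ e ∈ q.edges, e ∉ {e | e ∈ w₁.edges}) ∧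
      ∀ w ∈ q.support, w ∈ {z | z ∈ w₁.support} → w ≠ a → w = b := by
    have hc := h₂.rotate hx.2
    have hyc : y ∈ (w₂.rotate x hx.2).support := (mem_support_rotate_iff ..).2 hy.2
    have hec : e ∈ (w₂.rotate x hx.2).edges := (rotate_edges ..).mem_iff.2 he
    rcases split_edges _ hyc hec with h | h
    · exact ear _ _ _ _ rfl (hc.isPath_takeUntil hyc) hxy hx.1 hy.1 ⟨e, h, he1⟩
    · exact ear _ _ _ _ rfl (cyc_drop hc hyc hxy) hxy.symm hy.1 hx.1 ⟨e, h, he1⟩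
  obtain ⟨a, b, q, hq, hab, ha, hb, ⟨f, hf, hf1⟩, hint⟩ := key
  simp only [Set.mem_setOf_eq] at ha hb hf1 hint
  have hc := h₁.rotate ha
  have hbc : b ∈ (w₁.rotate a ha).support := (mem_support_rotate_iff ..).2 hb
  have hsup : ∀ z, z ∈ (w₁.rotate a ha).support → z ∈ w₁.support :=
    fun z hz => (mem_support_rotate_iff ..).1 hz
  have hedg : ∀ z, z ∈ (w₁.rotate a ha).edges → z ∈ w₁.edges :=
    fun z hz => (rotate_edges ..).mem_iff.1 hz
  generalize w₁.rotate a ha = c at *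
  have hp1 := hc.isPath_takeUntil hbc
  have hp2 := (cyc_drop hc hbc hab).reverse
  have hlen : (c.takeUntil b hbc).length + (c.dropUntil b hbc).length = c.length := by
    rw [← length_append, take_spec]
  have c1 := glue hq hp1 (by
    rintro rfl
    exact hf1 (hedg _ (edges_takeUntil_subset _ hbc hf)))
    (fun w hw hw' => hint w hw (hsup _ (support_takeUntil_subset_support _ hbc hw')))
  have c2 := glue hq hp2 (by
    rintro rfl
    rw [edges_reverse, List.mem_reverse] at hf
    exact hf1 (hedg _ (edges_dropUntil_subset _ hbc hf)))
    (fun w hw hw' => hint w hw (hsup _ (support_dropUntil_subset_support _ hbc (by simpa using hw'))))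
  by_cases e0 : Even c.length
  · exact ⟨_, c, hc, e0⟩
  by_cases e1 : Even (q.append (c.takeUntil b hbc).reverse).length
  · exact ⟨_, _, c1, e1⟩
  refine ⟨_, _, c2, ?_⟩
  simp only [length_append, length_reverse] at e1 ⊢
  rw [← hlen] at e0
  grind

lemma main {u v : V} (w₁ : G.Walk u u) (w₂ : G.Walk v v) (h₁ : w₁.IsCycle) (h₂ : w₂.IsCycle)
    (he : w₁.edges.toFinset ≠ w₂.edges.toFinset)
    (h : 2 ≤ (w₁.support.toFinset ∩ w₂.support.toFinset).card) :
    ∃ (x : V) (w : G.Walk x x), w.IsCycle ∧ Even w.length := by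
  by_cases h12 : ∃ e ∈ w₂.edges, e ∉ w₁.edges
  · exact main_aux w₁ w₂ h₁ h₂ h12 h
  by_cases h21 : ∃ e ∈ w₁.edges, e ∉ w₂.edges
  · exact main_aux w₂ w₁ h₂ h₁ h21 (by rwa [Finset.inter_comm])
  push Not at h12 h21
  refine absurd ?_ he
  ext e
  simp only [List.mem_toFinset]
  exact ⟨h21 e, h12 e⟩

end OddCyc

/-- A finite simple graph contains no cycle of even length if and only if it is a cactus
graph (any two distinct cycles intersect in at most one vertex) all of whose cycles are
odd. In particular, if a graph contains two distinct cycles sharing at least two vertices,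
then it contains a cycle of even length. Two cycles are distinct when their edge sets
differ. -/
theorem oddCycleGraph_iff_cactus_with_odd_cycles
    {V : Type*} [Fintype V] [DecidableEq V] (G : SimpleGraph V) :
    ((¬ ∃ (v : V) (w : G.Walk v v), w.IsCycle ∧ Even w.length) ↔
      ((∀ (u v : V) (w₁ : G.Walk u u) (w₂ : G.Walk v v),
          w₁.IsCycle → w₂.IsCycle → w₁.edges.toFinset ≠ w₂.edges.toFinset →
          (w₁.support.toFinset ∩ w₂.support.toFinset).card ≤ 1) ∧
        (∀ (v : V) (w : G.Walk v v), w.IsCycle → Odd w.length))) ∧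
    (∀ (u v : V) (w₁ : G.Walk u u) (w₂ : G.Walk v v),
        w₁.IsCycle → w₂.IsCycle → w₁.edges.toFinset ≠ w₂.edges.toFinset →
        2 ≤ (w₁.support.toFinset ∩ w₂.support.toFinset).card →
        ∃ (x : V) (w : G.Walk x x), w.IsCycle ∧ Even w.length) := by
  refine ⟨⟨fun hno => ⟨?_, ?_⟩, ?_⟩, ?_⟩
  · intro u v w₁ w₂ h₁ h₂ he
    by_contra hc
    exact hno (OddCyc.main w₁ w₂ h₁ h₂ he (by omega))
  · intro v w hw
    by_contra hc
    exact hno ⟨v, w, hw, Nat.not_odd_iff_even.1 hc⟩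
  · rintro ⟨-, h⟩ ⟨v, w, hw, he⟩
    exact Nat.not_even_iff_odd.2 (h v w hw) he
  · intro u v w₁ w₂ h₁ h₂ he h
    exact OddCyc.main w₁ w₂ h₁ h₂ he h
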